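/- arXiv:1709.05536 — 3 statements merged into one kernel-verified Lean document; each statement's English description precedes it below -/
import Mathlib

section
/- If σ(x)/x ∈ ℤ[ζ_p], then the ideal I = ⟨x, σ(x), ..., σ^{n-1}(x)⟩_ℤ of O_K equals the principal ideal x·O_K. -/
/-!
Write `β = ζ^λ α` and let `T` be the trace to `K`. Since `α = ∏_{j < (p-1)/2} (1 - ζ^{r^j})`
contains one factor from each pair `1 - ζ^{±a}`, passing from `α` to `σ α` only replaces the factor
`1 - ζ` by `1 - ζ⁻¹ = -ζ⁻¹ (1 - ζ)`, and `λ` is chosen so that `ζ^λ` absorbs the `ζ⁻¹`: thus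
`σ β = -β`. As `n` is odd and `(p-1)/n` even, `T β = 0`, so `x = -T (β ζ)`. The conjugates of `ζ`
span `ℤ[ζ]` over `ℤ` and `σ^i x = ± T (β σ^i ζ)`, so `I = T (β ℤ[ζ])`, which is visibly stable under
multiplication by `O_K`; hence `x O_K ⊆ I`. Conversely `σ^i x / x` is a product of conjugates of
`σ x / x`, so it is integral, and it is fixed by `σ^n`; hence `I ⊆ x O_K`.
-/

namespace CyclotomicTrace

section RelativeTrace

variable {F A : Type*} [CommSemiring F] [Ring A] [Algebra F A]

/-- The trace to the fixed ring of `σ ^ n` when `σ ^ (k * n) = 1`. The powers run over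
`n, 2n, ..., kn` instead of `0, n, ..., (k - 1)n`, as in the definition of `x`. -/
def relTrace (σ : A ≃ₐ[F] A) (n k : ℕ) : A →ₗ[F] A :=
  ∑ j ∈ Finset.range k, (σ ^ ((j + 1) * n)).toLinearMap

/-- The `ℤ`-module `⟨x, σ x, ..., σ ^ (n - 1) x⟩` spanned by `n` successive conjugates of `x`:
the `I` of the theorem. -/
def conjSpan (σ : A ≃ₐ[F] A) (n : ℕ) (x : A) : Submodule ℤ A :=
  Submodule.span ℤ {y | ∃ i < n, y = (σ ^ i) x}

variable {σ : A ≃ₐ[F] A} {n k : ℕ} {x w c θ : A}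

lemma relTrace_apply (σ : A ≃ₐ[F] A) (n k : ℕ) (w : A) :
    relTrace σ n k w = ∑ j ∈ Finset.range k, (σ ^ ((j + 1) * n)) w := by
  simp [relTrace]

lemma pow_apply_relTrace (σ : A ≃ₐ[F] A) (n k i : ℕ) (w : A) :
    (σ ^ i) (relTrace σ n k w) = relTrace σ n k ((σ ^ i) w) := by
  simp only [relTrace_apply, map_sum, ← AlgEquiv.mul_apply, ← pow_add, add_comm i]

lemma pow_apply_relTrace_eq_self (hσ : σ ^ (k * n) = 1) (w : A) :
    (σ ^ n) (relTrace σ n k w) = relTrace σ n k w := by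
  have hshift := (Finset.sum_range_succ' (fun j ↦ (σ ^ ((j + 1) * n)) w) k).symm.trans
    (Finset.sum_range_succ _ k)
  rw [show (k + 1) * n = k * n + (0 + 1) * n by ring, pow_add, hσ, one_mul] at hshift
  rw [pow_apply_relTrace, relTrace_apply, relTrace_apply, ← add_right_cancel hshift]
  simp only [← AlgEquiv.mul_apply, ← pow_add, ← Nat.succ_mul, Nat.succ_eq_add_one]

lemma pow_mul_apply_eq_self (hc : (σ ^ n) c = c) (m : ℕ) : (σ ^ (m * n)) c = c := by
  rw [mul_comm, pow_mul, AlgEquiv.coe_pow]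
  exact Function.iterate_fixed hc m

lemma relTrace_mul_of_apply_eq_self (hc : (σ ^ n) c = c) (w : A) :
    relTrace σ n k (w * c) = relTrace σ n k w * c := by
  simp only [relTrace_apply, map_mul, pow_mul_apply_eq_self hc, Finset.sum_mul]

lemma pow_apply_of_apply_eq_neg (hθ : σ θ = -θ) (i : ℕ) : (σ ^ i) θ = (-1) ^ i * θ := by
  induction i with
  | zero => simp
  | succ i ih => rw [pow_succ, AlgEquiv.mul_apply, hθ, map_neg, ih, pow_succ]; noncomm_ring

lemma relTrace_eq_zero_of_apply_eq_neg (hn : Odd n) (hk : Even k) (hθ : σ θ = -θ) :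
    relTrace σ n k θ = 0 := by
  have hterm (j : ℕ) : (σ ^ ((j + 1) * n)) θ = (-1) ^ j * -θ := by
    rw [pow_apply_of_apply_eq_neg hθ, mul_comm, pow_mul, hn.neg_one_pow, pow_succ, mul_assoc,
      neg_one_mul]
  simp only [relTrace_apply, hterm, ← Finset.sum_mul, neg_one_geom_sum, if_pos hk, zero_mul]

lemma relTrace_mul_one_sub (hn : Odd n) (hk : Even k) (hθ : σ θ = -θ) (w : A) :
    relTrace σ n k (θ * (1 - w)) = relTrace σ n k (-θ * w) := by
  rw [mul_one_sub, sub_eq_add_neg, ← neg_mul, map_add, relTrace_eq_zero_of_apply_eq_neg hn hk hθ,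
    zero_add]

lemma pow_apply_mem_conjSpan (hn : 0 < n) (hx : (σ ^ n) x = x) (i : ℕ) :
    (σ ^ i) x ∈ conjSpan σ n x := by
  rw [← Nat.mod_add_div' i n, pow_add, AlgEquiv.mul_apply, pow_mul_apply_eq_self hx]
  exact Submodule.subset_span ⟨i % n, Nat.mod_lt i hn, rfl⟩

lemma relTrace_mul_mem_conjSpan (hn : 0 < n) (hσ : σ ^ (k * n) = 1) (hθ : σ θ = -θ) {v : A}
    (hv : v ∈ Submodule.span ℤ (Set.range fun i : ℕ ↦ (σ ^ i) w)) :
    relTrace σ n k (θ * v) ∈ conjSpan σ n (relTrace σ n k (θ * w)) := by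
  induction hv using Submodule.span_induction with
  | zero => simp
  | add u v _ _ hu hv => rw [mul_add, map_add]; exact add_mem hu hv
  | smul a v _ hv => rw [mul_smul_comm, map_zsmul]; exact Submodule.smul_mem _ a hv
  | mem v hv =>
    obtain ⟨i, rfl⟩ := hv
    have hsign : θ * (σ ^ i) w = (-1) ^ i * (σ ^ i) (θ * w) := by
      rw [map_mul, pow_apply_of_apply_eq_neg hθ, ← mul_assoc, ← mul_assoc, ← pow_add,
        Even.neg_one_pow ⟨i, rfl⟩, one_mul]
    have hmem := pow_apply_mem_conjSpan hn (pow_apply_relTrace_eq_self hσ (θ * w)) i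
    rw [pow_apply_relTrace] at hmem
    rw [hsign]
    rcases neg_one_pow_eq_or A i with h | h <;> simpa [h] using hmem

end RelativeTrace

section FixedIntegers

variable {F L : Type*} [Field F] [Field L] [Algebra F L]

/-- The ring of integers of the subfield of `L` fixed by `τ`, as a subring of `L`. With `τ = σ ^ n`
it is the `O_K` of the theorem. -/
def fixedIntegers (τ : L ≃ₐ[F] L) : Subalgebra ℤ L :=
  integralClosure ℤ L ⊓ (τ : L →+* L).toIntAlgHom.equalizer (AlgHom.id ℤ L)

variable {σ : L ≃ₐ[F] L} {n : ℕ} {c x : L}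

lemma mem_fixedIntegers {τ : L ≃ₐ[F] L} : c ∈ fixedIntegers τ ↔ IsIntegral ℤ c ∧ τ c = c :=
  Iff.rfl

lemma mem_fixedField_zpowers {τ : L ≃ₐ[F] L} :
    c ∈ IntermediateField.fixedField (Subgroup.zpowers τ) ↔ τ c = c := by
  rw [IntermediateField.mem_fixedField_iff]
  exact ⟨fun h ↦ h τ (Subgroup.mem_zpowers τ), fun h g hg ↦
    (Subgroup.zpowers_le (H := MulAction.stabilizer (L ≃ₐ[F] L) c)).mpr h hg⟩

lemma mem_map_mulLeft_fixedIntegers {τ : L ≃ₐ[F] L} {y : L} :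
    y ∈ (fixedIntegers τ).toSubmodule.map (LinearMap.mulLeft ℤ x) ↔
      ∃ c ∈ IntermediateField.fixedField (Subgroup.zpowers τ), IsIntegral ℤ c ∧ y = x * c := by
  simp only [mem_fixedField_zpowers, Submodule.mem_map, Subalgebra.mem_toSubmodule,
    mem_fixedIntegers, LinearMap.mulLeft_apply, and_assoc, and_left_comm, @eq_comm _ y]

lemma isIntegral_pow_apply_div (hx : IsIntegral ℤ (σ x / x)) (i : ℕ) :
    IsIntegral ℤ ((σ ^ i) x / x) := by
  rcases eq_or_ne x 0 with rfl | hx0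
  · simpa using isIntegral_zero
  induction i with
  | zero => simpa [hx0] using isIntegral_one
  | succ i ih =>
    have hsplit : (σ ^ (i + 1)) x / x = σ ((σ ^ i) x / x) * (σ x / x) := by
      rw [map_div₀, div_mul_div_cancel₀ (by simpa using hx0), pow_succ', AlgEquiv.mul_apply]
    exact hsplit ▸ (map_isIntegral_int σ ih).mul hx

theorem conjSpan_le_map_fixedIntegers (hσx : (σ ^ n) x = x) (hx : IsIntegral ℤ (σ x / x)) :
    conjSpan σ n x ≤
      (fixedIntegers (σ ^ n)).toSubmodule.map (LinearMap.mulLeft ℤ x) := by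
  refine Submodule.span_le.mpr ?_
  rintro _ ⟨i, -, rfl⟩
  refine ⟨(σ ^ i) x / x, mem_fixedIntegers.mpr ⟨isIntegral_pow_apply_div hx i, ?_⟩,
    mul_div_cancel_of_imp' (by rintro rfl; exact map_zero _)⟩
  rw [map_div₀, hσx, ← AlgEquiv.mul_apply, ← pow_add, add_comm, pow_add, AlgEquiv.mul_apply, hσx]

theorem map_fixedIntegers_le_conjSpan {k : ℕ} {θ w : L} (hn : 0 < n) (hσ : σ ^ (k * n) = 1)
    (hθ : σ θ = -θ) (hw : IsIntegral ℤ w)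
    (hspan : ∀ v, IsIntegral ℤ v → v ∈ Submodule.span ℤ (Set.range fun i : ℕ ↦ (σ ^ i) w)) :
    (fixedIntegers (σ ^ n)).toSubmodule.map (LinearMap.mulLeft ℤ (relTrace σ n k (θ * w))) ≤
      conjSpan σ n (relTrace σ n k (θ * w)) := by
  rintro _ ⟨c, ⟨hc, hσc⟩, rfl⟩
  rw [LinearMap.mulLeft_apply, ← relTrace_mul_of_apply_eq_self hσc, mul_assoc]
  exact relTrace_mul_mem_conjSpan hn hσ hθ (hspan _ (hw.mul hc))

end FixedIntegers

section HalfNorm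

variable {F A : Type*} [CommSemiring F] [CommRing A] [Algebra F A] {ζ : A} {r : ℕ} {σ : A ≃ₐ[F] A}

lemma pow_apply_eq_pow_pow (hσ : σ ζ = ζ ^ r) (i : ℕ) : (σ ^ i) ζ = ζ ^ r ^ i := by
  induction i with
  | zero => simp
  | succ i ih => rw [pow_succ', AlgEquiv.mul_apply, ih, map_pow, hσ, ← pow_mul, pow_succ']

/-- Half of the norm product of `1 - ζ` when `r` is a primitive root modulo `p` and
`m = (p - 1) / 2`: the element `α` of the construction. -/
def halfNorm (ζ : A) (r m : ℕ) : A :=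
  ∏ j ∈ Finset.range m, (1 - ζ ^ r ^ j)

lemma apply_halfNorm_mul (hσ : σ ζ = ζ ^ r) (m : ℕ) :
    σ (halfNorm ζ r m) * (1 - ζ) = halfNorm ζ r m * (1 - ζ ^ r ^ m) := by
  rw [halfNorm, ← Finset.prod_range_succ, Finset.prod_range_succ', map_prod, pow_zero, pow_one]
  simp only [map_sub, map_one, map_pow, hσ, ← pow_mul, ← pow_succ']

end HalfNorm

section RootsOfUnity

variable {F L : Type*} [Field F] [Field L] [Algebra F L] {p : ℕ} {ζ : L} {r : ℕ} {σ : L ≃ₐ[F] L}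

lemma zpow_eq_zpow_of_intCast_eq [NeZero p] (hζ : IsPrimitiveRoot ζ p) {a b : ℤ}
    (h : (a : ZMod p) = b) : ζ ^ a = ζ ^ b := by
  have hdvd : (p : ℤ) ∣ a - b := by
    rw [← ZMod.intCast_zmod_eq_zero_iff_dvd, Int.cast_sub, h, sub_self]
  rw [← sub_add_cancel a b, zpow_add₀ (hζ.ne_zero (NeZero.ne p)),
    (hζ.zpow_eq_one_iff_dvd _).mpr hdvd, one_mul]

lemma pow_eq_pow_of_natCast_eq [NeZero p] (hζ : IsPrimitiveRoot ζ p) {a b : ℕ}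
    (h : (a : ZMod p) = b) : ζ ^ a = ζ ^ b := by
  exact_mod_cast zpow_eq_zpow_of_intCast_eq (a := a) (b := b) hζ (by exact_mod_cast h)

lemma apply_zpow_of_mul_sub_one_eq_one [NeZero p] (hζ : IsPrimitiveRoot ζ p) (hσ : σ ζ = ζ ^ r)
    {lam : ℤ} (hlam : ((lam * ((r : ℤ) - 1) : ℤ) : ZMod p) = 1) :
    σ (ζ ^ lam) = ζ ^ lam * ζ := by
  have hexp : (((r : ℤ) * lam : ℤ) : ZMod p) = (lam + 1 : ℤ) := by
    push_cast at hlam ⊢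
    linear_combination hlam
  rw [map_zpow₀, hσ, ← zpow_natCast, ← zpow_mul, zpow_eq_zpow_of_intCast_eq hζ hexp,
    zpow_add_one₀ (hζ.ne_zero (NeZero.ne p))]

variable [Fact p.Prime]

lemma pow_mem_span_orbit (hζ : IsPrimitiveRoot ζ p) (hr : IsPrimitiveRoot (r : ZMod p) (p - 1))
    (hσ : σ ζ = ζ ^ r) {m : ℕ} (hm : ¬p ∣ m) :
    ζ ^ m ∈ Submodule.span ℤ (Set.range fun i : ℕ ↦ (σ ^ i) ζ) := by
  have : NeZero (p - 1) := ⟨(Nat.sub_pos_of_lt (Fact.out : p.Prime).one_lt).ne'⟩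
  obtain ⟨i, -, hi⟩ := hr.eq_pow_of_pow_eq_one
    (ZMod.pow_card_sub_one_eq_one (mt (ZMod.natCast_eq_zero_iff m p).mp hm))
  refine Submodule.subset_span ⟨i, ?_⟩
  exact (pow_apply_eq_pow_pow hσ i).trans (pow_eq_pow_of_natCast_eq hζ (by exact_mod_cast hi))

lemma one_mem_span_orbit (hζ : IsPrimitiveRoot ζ p) (hr : IsPrimitiveRoot (r : ZMod p) (p - 1))
    (hσ : σ ζ = ζ ^ r) : (1 : L) ∈ Submodule.span ℤ (Set.range fun i : ℕ ↦ (σ ^ i) ζ) := by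
  have hp : p.Prime := Fact.out
  have hsum := hζ.geom_sum_eq_zero hp.one_lt
  rw [Finset.range_eq_Ico, Finset.sum_eq_sum_Ico_succ_bot hp.pos, pow_zero] at hsum
  rw [eq_neg_of_add_eq_zero_left hsum]
  refine neg_mem (sum_mem fun m hm ↦ pow_mem_span_orbit hζ hr hσ ?_)
  obtain ⟨h1, hmp⟩ := Finset.mem_Ico.mp hm
  exact Nat.not_dvd_of_pos_of_lt h1 hmp

lemma adjoin_le_span_orbit (hζ : IsPrimitiveRoot ζ p) (hr : IsPrimitiveRoot (r : ZMod p) (p - 1))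
    (hσ : σ ζ = ζ ^ r) :
    (Algebra.adjoin ℤ {ζ}).toSubmodule ≤ Submodule.span ℤ (Set.range fun i : ℕ ↦ (σ ^ i) ζ) := by
  rw [Algebra.adjoin_eq_span, Submodule.span_le]
  intro v hv
  obtain ⟨m, rfl⟩ := Submonoid.mem_closure_singleton.mp hv
  by_cases hm : p ∣ m
  · rw [SetLike.mem_coe, (hζ.pow_eq_one_iff_dvd m).mpr hm]
    exact one_mem_span_orbit hζ hr hσ
  · exact pow_mem_span_orbit hζ hr hσ hm

end RootsOfUnity

section AntiInvariant

variable {F L : Type*} [Field F] [Field L] [Algebra F L] {ζ : L} {r : ℕ} {σ : L ≃ₐ[F] L}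

lemma apply_halfNorm {m : ℕ} (hζ0 : ζ ≠ 0) (hζ1 : ζ ≠ 1) (hm : ζ ^ r ^ m = ζ⁻¹)
    (hσ : σ ζ = ζ ^ r) : σ (halfNorm ζ r m) = -(halfNorm ζ r m * ζ⁻¹) := by
  apply mul_right_cancel₀ (sub_ne_zero.mpr hζ1.symm)
  rw [apply_halfNorm_mul hσ, hm]
  field_simp
  ring

variable {p : ℕ} [Fact p.Prime]

lemma pow_pow_half_eq_inv (hp : Odd p) (hζ : IsPrimitiveRoot ζ p)
    (hr : IsPrimitiveRoot (r : ZMod p) (p - 1)) : ζ ^ r ^ ((p - 1) / 2) = ζ⁻¹ := by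
  have hpos : 0 < p - 1 := Nat.sub_pos_of_lt (Fact.out : p.Prime).one_lt
  have heven : p - 1 = (p - 1) / 2 * 2 := (Nat.div_two_mul_two_of_even (hp.tsub_odd odd_one)).symm
  have hneg : (r : ZMod p) ^ ((p - 1) / 2) = -1 := (hr.pow hpos heven).eq_neg_one_of_two_right
  rw [← zpow_neg_one, ← zpow_natCast]
  exact zpow_eq_zpow_of_intCast_eq hζ (by push_cast; exact hneg)

lemma apply_zpow_mul_halfNorm (hp : Odd p) (hζ : IsPrimitiveRoot ζ p)
    (hr : IsPrimitiveRoot (r : ZMod p) (p - 1)) (hσ : σ ζ = ζ ^ r) {lam : ℤ}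
    (hlam : ((lam * ((r : ℤ) - 1) : ℤ) : ZMod p) = 1) :
    σ (ζ ^ lam * halfNorm ζ r ((p - 1) / 2)) = -(ζ ^ lam * halfNorm ζ r ((p - 1) / 2)) := by
  have hprime : p.Prime := Fact.out
  have hζ0 : ζ ≠ 0 := hζ.ne_zero hprime.ne_zero
  rw [map_mul, apply_zpow_of_mul_sub_one_eq_one hζ hσ hlam,
    apply_halfNorm hζ0 (hζ.ne_one hprime.one_lt) (pow_pow_half_eq_inv hp hζ hr) hσ]
  field_simp

end AntiInvariant

section Cyclotomic

lemma pow_eq_one_of_natCast_pow_eq_one {F L : Type*} [Field F] [Field L] [Algebra F L] {p : ℕ}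
    [NeZero p] [IsCyclotomicExtension {p} F L] {ζ : L} {σ : L ≃ₐ[F] L} {r m : ℕ}
    (hζ : IsPrimitiveRoot ζ p) (hr : (r : ZMod p) ^ m = 1) (hσ : σ ζ = ζ ^ r) : σ ^ m = 1 := by
  refine AlgEquiv.coe_toAlgHom_injective ((hζ.powerBasis F).algHom_ext ?_)
  have hζr : ζ ^ r ^ m = ζ ^ 1 := pow_eq_pow_of_natCast_eq hζ (by push_cast; exact hr)
  simpa using (pow_apply_eq_pow_pow hσ m).trans hζr

variable {L : Type*} [Field L] [CharZero L] {p : ℕ} [Fact p.Prime] [IsCyclotomicExtension {p} ℚ L]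
  {ζ : L} {r : ℕ} {σ : L ≃ₐ[ℚ] L}

lemma mem_span_orbit_of_isIntegral (hζ : IsPrimitiveRoot ζ p)
    (hr : IsPrimitiveRoot (r : ZMod p) (p - 1)) (hσ : σ ζ = ζ ^ r) {v : L} (hv : IsIntegral ℤ v) :
    v ∈ Submodule.span ℤ (Set.range fun i : ℕ ↦ (σ ^ i) ζ) := by
  have := IsCyclotomicExtension.Rat.isIntegralClosure_adjoin_singleton_of_prime hζ
  obtain ⟨y, rfl⟩ := (IsIntegralClosure.isIntegral_iff (A := Algebra.adjoin ℤ {ζ})).mp hv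
  exact adjoin_le_span_orbit hζ hr hσ y.2

end Cyclotomic

section Congruence

variable {p n : ℕ}

lemma odd_of_mod_eq_one (hp : p.Prime) (hpn : p % n = 1) : Odd p := by
  refine hp.odd_of_ne_two ?_
  rintro rfl
  have hdvd : n ∣ 1 := by simpa [hpn] using (Nat.dvd_sub_mod 2 : n ∣ 2 - 2 % n)
  simp [Nat.dvd_one.mp hdvd] at hpn

lemma even_sub_one_div (hp : Odd p) (hn : Odd n) (hpn : p % n = 1) : Even ((p - 1) / n) := by
  have heven : Even ((p - 1) / n * n) := by
    rw [Nat.div_mul_cancel (hpn ▸ Nat.dvd_sub_mod p)]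
    exact hp.tsub_odd odd_one
  exact (Nat.even_mul.mp heven).resolve_right (Nat.not_even_iff_odd.mpr hn)

end Congruence

end CyclotomicTrace

open CyclotomicTrace

/-- If `σ(x)/x ∈ ℤ[ζ_p]`, then the ideal `I = ⟨x, σ(x), ..., σ^{n-1}(x)⟩_ℤ` of `O_K`
equals the principal ideal `x·O_K`, where `O_K` is the ring of integers of the fixed
field `K` of `σ^n`. -/
theorem stmt7 (p : ℕ+) (hp : (p : ℕ).Prime) (n : ℕ) (hn1 : 1 < n) (hnodd : Odd n)
    (hpn : (p : ℕ) % n = 1)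
    (ζ : CyclotomicField p ℚ) (hζ : IsPrimitiveRoot ζ p)
    (r : ℕ) (hr : orderOf (r : ZMod p) = (p : ℕ) - 1)
    (lam : ℤ) (hlam : ((lam * ((r : ℤ) - 1) : ℤ) : ZMod p) = 1)
    (σ : CyclotomicField p ℚ ≃ₐ[ℚ] CyclotomicField p ℚ) (hσ : σ ζ = ζ ^ r)
    (z : CyclotomicField p ℚ)
    (hz : z = ζ ^ lam * (∏ j ∈ Finset.range (((p : ℕ) - 1) / 2), (1 - ζ ^ r ^ j)) * (1 - ζ))
    (x : CyclotomicField p ℚ)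
    (hx : x = ∑ j ∈ Finset.range (((p : ℕ) - 1) / n), (σ ^ ((j + 1) * n)) z)
    (I : Submodule ℤ (CyclotomicField p ℚ))
    (hI : I = Submodule.span ℤ {y | ∃ i < n, y = (σ ^ i) x})
    (K : IntermediateField ℚ (CyclotomicField p ℚ))
    (hK : K = IntermediateField.fixedField (Subgroup.zpowers (σ ^ n)))
    (hu : σ x / x ∈ Algebra.adjoin ℤ {ζ}) :
    ∀ y : CyclotomicField p ℚ,
      y ∈ I ↔ ∃ c : CyclotomicField p ℚ, c ∈ K ∧ IsIntegral ℤ c ∧ y = x * c := by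
  have : Fact (p : ℕ).Prime := ⟨hp⟩
  have : IsCyclotomicExtension {(p : ℕ)} ℚ (CyclotomicField p ℚ) :=
    CyclotomicField.isCyclotomicExtension p ℚ
  have hpodd := odd_of_mod_eq_one hp hpn
  have hr' : IsPrimitiveRoot (r : ZMod p) (p - 1) := IsPrimitiveRoot.iff_orderOf.mpr hr
  have hσ_one : σ ^ (((p : ℕ) - 1) / n * n) = 1 := by
    rw [Nat.div_mul_cancel (hpn ▸ Nat.dvd_sub_mod _)]
    exact pow_eq_one_of_natCast_pow_eq_one hζ hr'.pow_eq_one hσ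
  have hβ := apply_zpow_mul_halfNorm hpodd hζ hr' hσ hlam
  set β := ζ ^ lam * halfNorm ζ r (((p : ℕ) - 1) / 2)
  have hxβ : x = relTrace σ n (((p : ℕ) - 1) / n) (-β * ζ) := by
    rw [← relTrace_mul_one_sub hnodd (even_sub_one_div hpodd hnodd hpn) hβ, hx, hz, relTrace_apply]
    rfl
  have hσx : (σ ^ n) x = x := hxβ ▸ pow_apply_relTrace_eq_self hσ_one _
  have hζ_int : IsIntegral ℤ ζ := hζ.isIntegral hp.pos
  have hI_eq : I = (fixedIntegers (σ ^ n)).toSubmodule.map (LinearMap.mulLeft ℤ x) := by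
    refine hI.trans (le_antisymm ?_ ?_)
    · exact conjSpan_le_map_fixedIntegers hσx (adjoin_le_integralClosure hζ_int hu)
    · rw [hxβ]
      exact map_fixedIntegers_le_conjSpan (one_pos.trans hn1) hσ_one (by rw [map_neg, hβ]) hζ_int
        fun v ↦ mem_span_orbit_of_isIntegral hζ hr' hσ
  intro y
  rw [hI_eq, hK]
  exact mem_map_mulLeft_fixedIntegers
end

section
/- If σ(x)/x ∈ ℤ[ζ_p], then |N_{K/Q}(x)| = p^{(n+1)/2}. -/
/-!
The element factors as `x = β * η`. Here `β` is the half product of the standard construction,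
which satisfies `σ β = -β` and is associated to `π ^ ((p - 1) / 2)` for `π = ζ - 1`, and `η` is an
alternating Gaussian period, a sum of `±ψ (h ^ j * a)` over the powers of `h = g ^ n`, where `σ`
acts on the additive character `ψ` by `ψ a ↦ ψ (g * a)`.

Integrality of `σ x / x` makes `η` divide all its conjugates. By Fourier inversion `p` is a
combination of these conjugates, so `η ∣ p` and `η` is associated to some `π ^ v`. With
`2 * c = (p - 1) / n` the order of `h`, the alternating `c`-th moment of the `ψ (h ^ j) - 1` is also
a combination of conjugates of `η`, and it is congruent to `2 * c * π ^ c` modulo `π ^ (c + 1)`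
because `(h ^ j) ^ c = (-1) ^ j`; hence `v ≤ c`.

The product of the `n` conjugates of `x` is a rational integer associated to
`π ^ (n * (n * c + v))`, so it is `±p ^ k` with `2 * k * c = n * c + v`. Since `n` is odd
and `0 ≤ v ≤ c`, this forces `2 * k = n + 1`.
-/

open NumberField Finset

theorem dvd_smul_of_mem_zpowers {G M : Type*} [Group G] [Finite G] [Monoid M]
    [MulDistribMulAction G M] {σ τ : G} {x : M} (hx : x ∣ σ • x)
    (hτ : τ ∈ Subgroup.zpowers σ) : x ∣ τ • x := by
  obtain ⟨k, rfl : σ ^ k = τ⟩ := mem_powers_iff_mem_zpowers.2 hτ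
  clear hτ
  induction k with
  | zero => simp
  | succ k ih =>
    have hσ : σ • x ∣ σ • σ ^ k • x := map_dvd (MulDistribMulAction.toMonoidHom M σ) ih
    simpa only [pow_succ', mul_smul] using hx.trans hσ

theorem associated_smul_of_mem_zpowers {G M : Type*} [Group G] [Finite G]
    [CommMonoidWithZero M] [IsCancelMulZero M] [MulDistribMulAction G M] {σ τ : G} {x : M}
    (hx : x ∣ σ • x) (hτ : τ ∈ Subgroup.zpowers σ) : Associated x (τ • x) := by
  refine associated_of_dvd_dvd (dvd_smul_of_mem_zpowers hx hτ) ?_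
  have hinv : τ • x ∣ τ • τ⁻¹ • x :=
    map_dvd (MulDistribMulAction.toMonoidHom M τ) (dvd_smul_of_mem_zpowers hx (inv_mem hτ))
  simpa using hinv

theorem smul_prod_range_pow_smul {G M : Type*} [Monoid G] [CommMonoid M]
    [MulDistribMulAction G M] {σ : G} {x : M} {n : ℕ} (hx : σ ^ n • x = x) :
    σ • ∏ i ∈ range n, σ ^ i • x = ∏ i ∈ range n, σ ^ i • x := by
  cases n with
  | zero => simp
  | succ n =>
    rw [smul_prod', prod_range_succ, prod_range_succ' (fun i ↦ σ ^ i • x)]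
    simp only [smul_smul, ← pow_succ', hx, pow_zero, one_smul]

theorem pow_smul_eq_neg_one_pow_mul {G R : Type*} [Monoid G] [CommRing R]
    [MulSemiringAction G R] {σ : G} {β : R} (hβ : σ • β = -β) (i : ℕ) :
    σ ^ i • β = (-1) ^ i * β := by
  induction i with
  | zero => simp
  | succ i ih => rw [pow_succ, mul_smul, hβ, smul_neg, ih]; ring

theorem exists_eq_two_mul_mul_of_odd_dvd {m n : ℕ} (hm : 0 < m) (heven : Even m) (hn : Odd n)
    (hnm : n ∣ m) : ∃ c, 0 < c ∧ m = 2 * c * n := by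
  obtain ⟨c, rfl⟩ :=
    (Nat.coprime_two_left.2 hn).mul_dvd_of_dvd_of_dvd heven.two_dvd hnm
  exact ⟨c, Nat.pos_of_mul_pos_left hm, by ring⟩

theorem eq_succ_div_two_of_two_mul_mul_eq {n c v k : ℕ} (hn : Odd n) (hc : 0 < c) (hv : v ≤ c)
    (h : 2 * k * c = n * c + v) : k = (n + 1) / 2 := by
  obtain ⟨m, rfl⟩ := hn
  have hlow : m < k := by
    by_contra! hkm
    nlinarith
  have hupp : k < m + 2 := by
    by_contra! hkm
    nlinarith
  lia

theorem sub_one_pow_succ_dvd_pow_sub_one_pow_sub {R : Type*} [CommRing R] (z : R) (a k : ℕ) :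
    (z - 1) ^ (k + 1) ∣ (z ^ a - 1) ^ k - a ^ k * (z - 1) ^ k := by
  have hgeom : z - 1 ∣ ∑ i ∈ range a, z ^ i - a := by
    simpa using dvd_sum (s := range a) fun i _ ↦ sub_one_dvd_pow_sub_one z i
  rw [← geom_sum_mul, mul_pow, ← sub_mul, pow_succ']
  exact mul_dvd_mul_right (hgeom.trans (sub_dvd_pow_sub_pow _ _ k)) _

theorem pow_orderOf_div_two_eq_neg_one {R : Type*} [CommRing R] [IsDomain R] {g : R}
    (hpos : 0 < orderOf g) (heven : Even (orderOf g)) : g ^ (orderOf g / 2) = -1 :=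
  ((IsPrimitiveRoot.orderOf g).pow hpos
    (Nat.div_mul_cancel heven.two_dvd).symm).eq_neg_one_of_two_right

theorem sum_units_addChar_mul {F R : Type*} [Field F] [Fintype F] [DecidableEq F]
    [CommRing R] [IsDomain R] {ψ : AddChar F R} (hψ : ψ.IsPrimitive) (b : F) :
    ∑ u : Fˣ, ψ (u * b) = (if b = 0 then (Fintype.card F : R) else 0) - 1 := by
  have hsum := AddChar.sum_mulShift b hψ
  rw [Fintype.sum_eq_add_sum_subtype_ne _ (0 : F), ← Equiv.sum_comp unitsEquivNeZero] at hsum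
  push_cast at hsum
  simp [← hsum, unitsEquivNeZero]

section Period

variable {F R : Type*} [CommRing F] [CommRing R] (ψ : AddChar F R)

/-- The alternating Gaussian period of the additive character `ψ` at `a`, over the powers of `h`.
The sum is empty when `h` has infinite order, since `orderOf h = 0` then. -/
noncomputable def altPeriod (h a : F) : R :=
  ∑ j ∈ range (orderOf h), (-1) ^ j * ψ (h ^ j * a)

/-- The factor `ζ ^ λ * α` of the standard construction, written with an additive character `ψ` in
place of `a ↦ ζ ^ a`: the product runs over the first half of the powers of `g`. -/
noncomputable def halfProd (l g : F) : R :=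
  ψ l * ∏ j ∈ range (orderOf g / 2), (1 - ψ (g ^ j))

variable {ψ} {h : F}

theorem altPeriod_zero (heven : Even (orderOf h)) : altPeriod ψ h 0 = 0 := by
  simp [altPeriod, neg_one_geom_sum, heven]

theorem altPeriod_self_mul (heven : Even (orderOf h)) (a : F) :
    altPeriod ψ h (h * a) = -altPeriod ψ h a := by
  have hshift := (sum_range_succ' (fun j ↦ (-1) ^ j * ψ (h ^ j * a)) (orderOf h)).symm.trans
    (sum_range_succ _ _)
  simp only [pow_orderOf_eq_one, heven.neg_one_pow, pow_zero, add_left_inj] at hshift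
  rw [altPeriod, altPeriod, ← hshift, ← sum_neg_distrib]
  refine sum_congr rfl fun j _ ↦ ?_
  rw [pow_succ, pow_succ, mul_assoc (h ^ j)]
  ring

theorem sum_neg_one_pow_mul_sub_one_pow (k : ℕ) :
    ∑ j ∈ range (orderOf h), (-1) ^ j * (ψ (h ^ j) - 1) ^ k =
      ∑ i ∈ range (k + 1), (-1) ^ (i + k) * k.choose i * altPeriod ψ h i := by
  simp only [altPeriod, mul_sum, sub_pow]
  rw [sum_comm]
  refine sum_congr rfl fun i _ ↦ sum_congr rfl fun j _ ↦ ?_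
  rw [mul_comm _ (i : F), ← nsmul_eq_mul, AddChar.map_nsmul_eq_pow]
  ring

variable {G : Type*} [Monoid G] [MulSemiringAction G R] {σ : G} {g l : F}

theorem pow_smul_addChar (hσ : ∀ a, σ • ψ a = ψ (g * a)) (i : ℕ) (a : F) :
    σ ^ i • ψ a = ψ (g ^ i * a) := by
  induction i with
  | zero => simp
  | succ i ih => rw [pow_succ', mul_smul, ih, hσ, pow_succ', mul_assoc]

theorem smul_altPeriod (hσ : ∀ a, σ • ψ a = ψ (g * a)) (a : F) :
    σ • altPeriod ψ h a = altPeriod ψ h (g * a) := by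
  simp only [altPeriod, smul_sum, smul_mul', smul_pow', smul_neg, smul_one, hσ, mul_left_comm g]

theorem smul_halfProd [IsDomain F] [IsDomain R] (hpos : 0 < orderOf g)
    (heven : Even (orderOf g)) (hl : l * (g - 1) = 1) (hψ : ψ 1 ≠ 1)
    (hσ : ∀ a, σ • ψ a = ψ (g * a)) : σ • halfProd ψ l g = -halfProd ψ l g := by
  have hshift := (prod_range_succ' (fun j ↦ 1 - ψ (g ^ j)) (orderOf g / 2)).symm.trans
    (prod_range_succ _ _)
  rw [pow_orderOf_div_two_eq_neg_one hpos heven, pow_zero] at hshift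
  have hgl : ψ (g * l) = ψ l * ψ 1 := by
    rw [← AddChar.map_add_eq_mul]; congr 1; linear_combination hl
  have hinv : ψ 1 * ψ (-1) = 1 := by simp [← AddChar.map_add_eq_mul]
  refine mul_right_cancel₀ (sub_ne_zero.2 hψ.symm) ?_
  simp only [halfProd, smul_mul', smul_prod', smul_sub, smul_one, hσ, ← pow_succ', hgl]
  linear_combination ψ l * ψ 1 * hshift -
    ψ l * (∏ j ∈ range (orderOf g / 2), (1 - ψ (g ^ j))) * hinv

theorem pow_smul_mul_altPeriod {β : R} {n : ℕ} (hn : Odd n) (heven : Even (orderOf (g ^ n)))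
    (hσ : ∀ a, σ • ψ a = ψ (g * a)) (hβ : σ • β = -β) (a : F) :
    σ ^ n • (β * altPeriod ψ (g ^ n) a) = β * altPeriod ψ (g ^ n) a := by
  rw [smul_mul', pow_smul_eq_neg_one_pow_mul hβ, smul_altPeriod (pow_smul_addChar hσ n),
    altPeriod_self_mul heven, hn.neg_one_pow]
  ring

theorem sum_pow_smul_mul_one_sub {β : R} {n : ℕ} (hn : Odd n) (heven : Even (orderOf (g ^ n)))
    (hσ : ∀ a, σ • ψ a = ψ (g * a)) (hβ : σ • β = -β) :
    ∑ j ∈ range (orderOf (g ^ n)), σ ^ ((j + 1) * n) • (β * (1 - ψ 1)) =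
      β * altPeriod ψ (g ^ n) (g ^ n) := by
  have hterm (j : ℕ) : σ ^ ((j + 1) * n) • (β * (1 - ψ 1)) =
      β * ((-1) ^ j * ψ ((g ^ n) ^ j * g ^ n)) - β * (-1) ^ j := by
    rw [smul_mul', pow_smul_eq_neg_one_pow_mul hβ, smul_sub, smul_one, pow_smul_addChar hσ,
      mul_comm (j + 1), pow_mul, hn.neg_one_pow, pow_mul, mul_one, pow_succ, pow_succ]
    ring
  rw [sum_congr rfl fun j _ ↦ hterm j, sum_sub_distrib, ← mul_sum, ← mul_sum, neg_one_geom_sum,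
    if_pos heven, mul_zero, sub_zero, altPeriod]

end Period

theorem sum_units_mul_altPeriod {F R : Type*} [Field F] [Fintype F] [DecidableEq F]
    [CommRing R] [IsDomain R] {ψ : AddChar F R} (hψ : ψ.IsPrimitive) {h : F} (hpos : 0 < orderOf h)
    (heven : Even (orderOf h)) :
    ∑ u : Fˣ, ψ (-u) * altPeriod ψ h u = Fintype.card F := by
  have hsplit (u : Fˣ) (j : ℕ) : ψ (-u) * ((-1) ^ j * ψ (h ^ j * u)) =
      (-1) ^ j * ψ (u * (h ^ j - 1)) := by
    rw [mul_left_comm, ← AddChar.map_add_eq_mul]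
    ring_nf
  have hone (j : ℕ) (hj : j ∈ range (orderOf h)) : h ^ j - 1 = 0 ↔ j = 0 := by
    rw [sub_eq_zero]
    exact ⟨fun hj1 ↦ Nat.eq_zero_of_dvd_of_lt (orderOf_dvd_of_pow_eq_one hj1) (mem_range.1 hj),
      fun hj0 ↦ by simp [hj0]⟩
  have hinner (j : ℕ) : ∑ u : Fˣ, (-1) ^ j * ψ (u * (h ^ j - 1)) =
      (-1) ^ j * (if h ^ j - 1 = 0 then (Fintype.card F : R) else 0) - (-1) ^ j := by
    rw [← mul_sum, sum_units_addChar_mul hψ, mul_sub, mul_one]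
  simp only [altPeriod, mul_sum, hsplit]
  rw [sum_comm, sum_congr rfl fun j _ ↦ hinner j, sum_sub_distrib, neg_one_geom_sum,
    if_pos heven, sub_zero,
    sum_eq_single_of_mem 0 (mem_range.2 hpos) fun j hj hj0 ↦ by simp [hone j hj, hj0]]
  simp

theorem altPeriod_dvd_card {F R : Type*} [Field F] [Fintype F] [CommRing R] [IsDomain R]
    {ψ : AddChar F R} (hψ : ψ.IsPrimitive) {h : F} (hpos : 0 < orderOf h)
    (heven : Even (orderOf h)) {d : R} (hd : ∀ b ≠ 0, d ∣ altPeriod ψ h b) :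
    d ∣ (Fintype.card F : R) := by
  classical
  rw [← sum_units_mul_altPeriod hψ hpos heven]
  exact dvd_sum fun u _ ↦ (hd u u.ne_zero).mul_left _

theorem exists_intCast_eq_of_smul_eq {K : Type*} [Field K] [NumberField K] [IsGalois ℚ K]
    {σ : Gal(K/ℚ)} (hσ : Subgroup.zpowers σ = ⊤) {y : 𝓞 K} (hy : σ • y = y) :
    ∃ m : ℤ, (m : 𝓞 K) = y := by
  have hstab : Subgroup.zpowers σ ≤ MulAction.stabilizer Gal(K/ℚ) y := by
    rwa [Subgroup.zpowers_le]
  exact Algebra.IsInvariant.isInvariant (G := Gal(K/ℚ)) y fun τ ↦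
    hstab (hσ ▸ Subgroup.mem_top τ)

theorem dvd_smul_of_isIntegral_div {K : Type*} [Field K] [CharZero K] {σ : Gal(K/ℚ)} {y : 𝓞 K}
    (hint : IsIntegral ℤ (σ y / y)) : y ∣ σ • y := by
  obtain rfl | hy := eq_or_ne y 0
  · simp
  · refine ⟨⟨_, hint⟩, RingOfIntegers.ext ?_⟩
    exact (mul_div_cancel₀ _ (RingOfIntegers.coe_ne_zero_iff.2 hy)).symm

section Cyclotomic

variable {p : ℕ} [Fact p.Prime] {K : Type*} [Field K] {ζ : K} (hζ : IsPrimitiveRoot ζ p)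

/-- The additive character `a ↦ ζ ^ a` of `ZMod p`, with values in the ring of integers so that
divisibility can be expressed there. -/
noncomputable def cyclotomicChar : AddChar (ZMod p) (𝓞 K) :=
  AddChar.zmodChar p hζ.toInteger_isPrimitiveRoot.pow_eq_one

theorem cyclotomicChar_apply (a : ZMod p) : cyclotomicChar hζ a = hζ.toInteger ^ a.val :=
  AddChar.zmodChar_apply _ _

theorem cyclotomicChar_natCast (a : ℕ) : cyclotomicChar hζ a = hζ.toInteger ^ a :=
  AddChar.zmodChar_apply' _ _

theorem isPrimitive_cyclotomicChar : (cyclotomicChar hζ).IsPrimitive :=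
  AddChar.zmodChar_primitive_of_primitive_root p hζ.toInteger_isPrimitiveRoot

theorem associated_cyclotomicChar_sub_one {a : ZMod p} (ha : a ≠ 0) :
    Associated (hζ.toInteger - 1) (cyclotomicChar hζ a - 1) := by
  rw [cyclotomicChar_apply]
  exact hζ.toInteger_isPrimitiveRoot.associated_sub_one_pow_sub_one_of_coprime
    (ZMod.val_coe_unit_coprime (Units.mk0 a ha))

theorem associated_halfProd {g : ZMod p} (hg : g ≠ 0) (l : ZMod p) :
    Associated ((hζ.toInteger - 1) ^ (orderOf g / 2)) (halfProd (cyclotomicChar hζ) l g) := by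
  have hprod : Associated ((hζ.toInteger - 1) ^ (orderOf g / 2))
      (∏ j ∈ range (orderOf g / 2), (1 - cyclotomicChar hζ (g ^ j))) := by
    simpa using Associated.prod (range (orderOf g / 2)) (fun _ ↦ hζ.toInteger - 1) _ fun j _ ↦
      (neg_sub (cyclotomicChar hζ (g ^ j)) 1) ▸
        (associated_cyclotomicChar_sub_one hζ (pow_ne_zero j hg)).neg_right
  exact (associated_isUnit_mul_right_iff (AddChar.val_isUnit _ l)).2 hprod

theorem coe_cyclotomicChar_intCast (a : ℤ) : (cyclotomicChar hζ (a : ZMod p) : K) = ζ ^ a := by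
  have hone : (cyclotomicChar hζ 1 : K) = ζ := by
    rw [← Nat.cast_one, cyclotomicChar_natCast, pow_one]
    exact hζ.coe_toInteger
  simpa [hone] using AddChar.map_zsmul_eq_zpow
    ((algebraMap (𝓞 K) K : 𝓞 K →* K).compAddChar (cyclotomicChar hζ)) a 1

theorem coe_halfProd_cyclotomicChar (l : ℤ) (r : ℕ) :
    ((halfProd (cyclotomicChar hζ) l r : 𝓞 K) : K) =
      ζ ^ l * ∏ j ∈ range (orderOf (r : ZMod p) / 2), (1 - ζ ^ r ^ j) := by
  have hpow (j : ℕ) : (cyclotomicChar hζ ((r : ZMod p) ^ j) : K) = ζ ^ r ^ j := by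
    exact_mod_cast coe_cyclotomicChar_intCast hζ ((r : ℤ) ^ j)
  simp [halfProd, coe_cyclotomicChar_intCast, hpow]

variable [NumberField K] [IsCyclotomicExtension {p} ℚ K]

theorem smul_cyclotomicChar (σ : Gal(K/ℚ)) (a : ZMod p) :
    σ • cyclotomicChar hζ a =
      cyclotomicChar hζ (IsCyclotomicExtension.Rat.galEquivZMod p K σ * a) := by
  have hpow : cyclotomicChar hζ a ^ p = 1 := by
    rw [← AddChar.map_nsmul_eq_pow]; simp
  rw [IsCyclotomicExtension.Rat.galEquivZMod_smul_of_pow_eq p K σ hpow,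
    ← AddChar.map_nsmul_eq_pow]
  simp

include hζ in
theorem galEquivZMod_eq_natCast {σ : Gal(K/ℚ)} {r : ℕ} (hσ : σ ζ = ζ ^ r) :
    (IsCyclotomicExtension.Rat.galEquivZMod p K σ : ZMod p) = r := by
  have hpow := IsCyclotomicExtension.Rat.galEquivZMod_apply_of_pow_eq p K σ hζ.pow_eq_one
  rw [hσ, pow_eq_pow_mod r hζ.pow_eq_one] at hpow
  have hmod := hζ.pow_inj (Nat.mod_lt r (Fact.out : p.Prime).pos) (ZMod.val_lt _) hpow
  rw [← ZMod.natCast_zmod_val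
    (IsCyclotomicExtension.Rat.galEquivZMod p K σ : ZMod p), ← hmod, ZMod.natCast_mod]

theorem sub_one_pow_succ_dvd_cyclotomicChar_sub {a : ZMod p} {k : ℕ} {e : ℤ}
    (he : (e : ZMod p) = a ^ k) :
    (hζ.toInteger - 1) ^ (k + 1) ∣
      (cyclotomicChar hζ a - 1) ^ k - e * (hζ.toInteger - 1) ^ k := by
  have hdvd : hζ.toInteger - 1 ∣ ((a.val ^ k - e : ℤ) : 𝓞 K) := by
    rw [IsCyclotomicExtension.Rat.zeta_sub_one_dvd_intCast_iff' p hζ,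
      ← ZMod.intCast_zmod_eq_zero_iff_dvd]
    simp [he]
  have hval : (hζ.toInteger - 1) ^ (k + 1) ∣
      ((a.val ^ k - e : ℤ) : 𝓞 K) * (hζ.toInteger - 1) ^ k := by
    rw [pow_succ']; exact mul_dvd_mul_right hdvd _
  convert (sub_one_pow_succ_dvd_pow_sub_one_pow_sub hζ.toInteger a.val k).add hval using 1
  rw [cyclotomicChar_apply]; push_cast; ring

theorem exists_not_sub_one_pow_dvd_altPeriod {h : ZMod p} (hpos : 0 < orderOf h)
    (heven : Even (orderOf h)) :
    ∃ b ≠ 0, ¬ (hζ.toInteger - 1) ^ (orderOf h / 2 + 1) ∣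
      altPeriod (cyclotomicChar hζ) h b := by
  by_contra! hall
  set π := hζ.toInteger - 1 with hπ
  set c := orderOf h / 2
  have hdvd (b : ZMod p) : π ^ (c + 1) ∣ altPeriod (cyclotomicChar hζ) h b := by
    obtain rfl | hb := eq_or_ne b 0
    · simp [altPeriod_zero heven]
    · exact hall b hb
  have hmoment : π ^ (c + 1) ∣
      ∑ j ∈ range (orderOf h), (-1) ^ j * (cyclotomicChar hζ (h ^ j) - 1) ^ c := by
    rw [sum_neg_one_pow_mul_sub_one_pow]
    exact dvd_sum fun i _ ↦ (hdvd i).mul_left _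
  have hterm (j : ℕ) : π ^ (c + 1) ∣
      (-1) ^ j * (cyclotomicChar hζ (h ^ j) - 1) ^ c - π ^ c := by
    have hchar : (((-1) ^ j : ℤ) : ZMod p) = (h ^ j) ^ c := by
      rw [pow_right_comm, pow_orderOf_div_two_eq_neg_one hpos heven]; simp
    convert (sub_one_pow_succ_dvd_cyclotomicChar_sub hζ hchar).mul_left ((-1) ^ j) using 1
    push_cast
    rw [mul_sub, ← mul_assoc, ← mul_pow]
    simp [hπ]
  have hlead : π ^ c * π ∣ π ^ c * (orderOf h : ℤ) := by
    have hsum := dvd_sum (s := range (orderOf h)) fun j _ ↦ hterm j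
    rw [sum_sub_distrib, sum_const, card_range, dvd_sub_right hmoment] at hsum
    simpa [pow_succ, nsmul_eq_mul, mul_comm] using hsum
  have hπc : π ^ c ≠ 0 := pow_ne_zero _ hζ.zeta_sub_one_prime'.ne_zero
  have hp := (IsCyclotomicExtension.Rat.zeta_sub_one_dvd_intCast_iff' p hζ).1
    ((mul_dvd_mul_iff_left hπc).1 hlead)
  exact (Nat.le_of_dvd hpos (Int.natCast_dvd_natCast.1 hp)).not_gt
    (ZMod.orderOf_lt (Fact.out : p.Prime).one_lt h)

theorem exists_associated_altPeriod {h a : ZMod p} (hpos : 0 < orderOf h)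
    (heven : Even (orderOf h))
    (hdvd : ∀ b ≠ 0, altPeriod (cyclotomicChar hζ) h a ∣ altPeriod (cyclotomicChar hζ) h b) :
    ∃ v ≤ orderOf h / 2,
      Associated (altPeriod (cyclotomicChar hζ) h a) ((hζ.toInteger - 1) ^ v) := by
  have hdvdp := altPeriod_dvd_card (isPrimitive_cyclotomicChar hζ) hpos heven hdvd
  rw [ZMod.card,
    ← (IsCyclotomicExtension.Rat.associated_zeta_sub_one_pow_prime p hζ).dvd_iff_dvd_right,
    dvd_prime_pow hζ.zeta_sub_one_prime'] at hdvdp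
  obtain ⟨v, -, hv⟩ := hdvdp
  refine ⟨v, ?_, hv⟩
  obtain ⟨b, hb, hnot⟩ := exists_not_sub_one_pow_dvd_altPeriod hζ hpos heven
  by_contra! hlt
  exact hnot ((pow_dvd_pow _ hlt).trans (hv.symm.dvd.trans (hdvd b hb)))

include hζ in
theorem exists_pow_of_associated_sub_one_pow (hp2 : p ≠ 2) {m : ℤ} {E : ℕ}
    (hm : Associated (m : 𝓞 K) ((hζ.toInteger - 1) ^ E)) :
    ∃ k, k * (p - 1) = E ∧ (m = p ^ k ∨ m = -p ^ k) := by
  have hp : p.Prime := Fact.out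
  have hnorm : m.natAbs ^ (p - 1) = p ^ E := by
    have hassoc := hm.map (Algebra.norm ℤ (S := 𝓞 K))
    rw [← eq_intCast (algebraMap ℤ (𝓞 K)), Algebra.norm_algebraMap, map_pow,
      hζ.norm_toInteger_sub_one_of_prime_ne_two' hp2, RingOfIntegers.rank,
      IsCyclotomicExtension.Rat.finrank p K, Nat.totient_prime hp, Int.associated_iff_natAbs]
      at hassoc
    simpa [Int.natAbs_pow] using hassoc
  have hp1 : p - 1 ≠ 0 := (Nat.sub_pos_of_lt hp.one_lt).ne'
  obtain ⟨k, -, hk⟩ := (Nat.dvd_prime_pow hp).1 (hnorm ▸ dvd_pow_self m.natAbs hp1)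
  rw [hk, ← pow_mul] at hnorm
  refine ⟨k, Nat.pow_right_injective hp.two_le hnorm, ?_⟩
  simpa [hk] using Int.natAbs_eq m

theorem zpowers_eq_top_of_orderOf_galEquivZMod {σ : Gal(K/ℚ)}
    (hσ : orderOf (IsCyclotomicExtension.Rat.galEquivZMod p K σ) = p - 1) :
    Subgroup.zpowers σ = ⊤ := by
  apply Subgroup.eq_top_of_card_eq
  rw [Nat.card_zpowers, ← MulEquiv.orderOf_eq (IsCyclotomicExtension.Rat.galEquivZMod p K), hσ,
    Nat.card_congr (IsCyclotomicExtension.Rat.galEquivZMod p K).toEquiv, Nat.card_eq_fintype_card,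
    ZMod.card_units]

theorem exists_associated_altPeriod_of_dvd_smul {σ : Gal(K/ℚ)} (hσ : Subgroup.zpowers σ = ⊤)
    {h a : ZMod p} (ha : a ≠ 0) (hpos : 0 < orderOf h) (heven : Even (orderOf h))
    (hdvd : altPeriod (cyclotomicChar hζ) h a ∣ σ • altPeriod (cyclotomicChar hζ) h a) :
    ∃ v ≤ orderOf h / 2,
      Associated (altPeriod (cyclotomicChar hζ) h a) ((hζ.toInteger - 1) ^ v) := by
  refine exists_associated_altPeriod hζ hpos heven fun b hb ↦ ?_
  obtain ⟨τ, hτ⟩ := (IsCyclotomicExtension.Rat.galEquivZMod p K).surjective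
    (Units.mk0 b hb / Units.mk0 a ha)
  have hτa : τ • altPeriod (cyclotomicChar hζ) h a = altPeriod (cyclotomicChar hζ) h b := by
    rw [smul_altPeriod (smul_cyclotomicChar hζ τ), hτ]
    simp [ha]
  exact hτa ▸ dvd_smul_of_mem_zpowers hdvd (hσ ▸ Subgroup.mem_top τ)

theorem exists_prod_pow_smul_eq (hp2 : p ≠ 2) {σ : Gal(K/ℚ)} (hσ : Subgroup.zpowers σ = ⊤)
    {n e : ℕ} {x : 𝓞 K} (hfix : σ ^ n • x = x) (hdvd : x ∣ σ • x)
    (hx : Associated x ((hζ.toInteger - 1) ^ e)) :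
    ∃ k, k * (p - 1) = e * n ∧
      (∏ i ∈ range n, σ ^ i • x = p ^ k ∨ ∏ i ∈ range n, σ ^ i • x = -p ^ k) := by
  have : IsGalois ℚ K := IsCyclotomicExtension.isGalois {p} ℚ K
  obtain ⟨m, hm⟩ := exists_intCast_eq_of_smul_eq hσ (smul_prod_range_pow_smul hfix)
  have hassoc : Associated (m : 𝓞 K) ((hζ.toInteger - 1) ^ (e * n)) := by
    rw [hm, pow_mul]
    simpa using Associated.prod (range n) (fun i ↦ σ ^ i • x)
      (fun _ ↦ (hζ.toInteger - 1) ^ e) fun i _ ↦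
      (associated_smul_of_mem_zpowers hdvd (hσ ▸ Subgroup.mem_top (σ ^ i))).symm.trans hx
  obtain ⟨k, hk, rfl | rfl⟩ := exists_pow_of_associated_sub_one_pow hζ hp2 hassoc
  · exact ⟨k, hk, .inl (by simp [← hm])⟩
  · exact ⟨k, hk, .inr (by simp [← hm])⟩

theorem smul_halfProd_cyclotomicChar (hp2 : p ≠ 2) {σ : Gal(K/ℚ)} {l : ZMod p}
    (hσ : orderOf (IsCyclotomicExtension.Rat.galEquivZMod p K σ) = p - 1)
    (hl : l * ((IsCyclotomicExtension.Rat.galEquivZMod p K σ : ZMod p) - 1) = 1) :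
    σ • halfProd (cyclotomicChar hζ) l (IsCyclotomicExtension.Rat.galEquivZMod p K σ) =
      -halfProd (cyclotomicChar hζ) l (IsCyclotomicExtension.Rat.galEquivZMod p K σ) := by
  have hp : p.Prime := Fact.out
  rw [← orderOf_units] at hσ
  refine smul_halfProd (hσ ▸ Nat.sub_pos_of_lt hp.one_lt) (hσ ▸ hp.even_sub_one hp2) hl ?_
    (smul_cyclotomicChar hζ σ)
  rw [← sub_ne_zero]
  exact (associated_cyclotomicChar_sub_one hζ one_ne_zero).ne_zero_iff.1
    hζ.zeta_sub_one_prime'.ne_zero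

theorem prod_pow_smul_eq_of_dvd_smul (hp2 : p ≠ 2) {n : ℕ} (hn : Odd n) (hnp : n ∣ p - 1)
    {σ : Gal(K/ℚ)} {g : (ZMod p)ˣ} (hσ : IsCyclotomicExtension.Rat.galEquivZMod p K σ = g)
    (hg : orderOf g = p - 1) {l : ZMod p} (hl : l * (g - 1) = 1) {x : 𝓞 K}
    (hx : x = ∑ j ∈ range ((p - 1) / n),
      σ ^ ((j + 1) * n) • (halfProd (cyclotomicChar hζ) l g * (1 - cyclotomicChar hζ 1)))
    (hdvd : x ∣ σ • x) :
    ∏ i ∈ range n, σ ^ i • x = p ^ ((n + 1) / 2) ∨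
      ∏ i ∈ range n, σ ^ i • x = -p ^ ((n + 1) / 2) := by
  have hp : p.Prime := Fact.out
  subst hσ
  set g : (ZMod p)ˣ := IsCyclotomicExtension.Rat.galEquivZMod p K σ
  have hg' : orderOf (g : ZMod p) = p - 1 := orderOf_units.trans hg
  have horder : orderOf ((g : ZMod p) ^ n) = (p - 1) / n := by
    rw [orderOf_pow_of_dvd hn.pos.ne' (hg' ▸ hnp), hg']
  obtain ⟨c, hc0, hc⟩ := exists_eq_two_mul_mul_of_odd_dvd (Nat.sub_pos_of_lt hp.one_lt)
    (hp.even_sub_one hp2) hn hnp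
  have hdiv : (p - 1) / n = 2 * c := by rw [hc, Nat.mul_div_cancel _ hn.pos]
  rw [hdiv] at hx horder
  have heven : Even (orderOf ((g : ZMod p) ^ n)) := horder ▸ even_two_mul c
  have hψ := smul_cyclotomicChar hζ σ
  set β := halfProd (cyclotomicChar hζ) l g
  set η := altPeriod (cyclotomicChar hζ) ((g : ZMod p) ^ n) (g ^ n)
  have hβ : σ • β = -β := smul_halfProd_cyclotomicChar hζ hp2 hg hl
  have hβπ := associated_halfProd hζ g.ne_zero l
  have hβ0 : β ≠ 0 := hβπ.ne_zero_iff.1 (pow_ne_zero _ hζ.zeta_sub_one_prime'.ne_zero)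
  have hxβ : x = β * η := by rw [hx, ← sum_pow_smul_mul_one_sub hn heven hψ hβ, horder]
  have hη : η ∣ σ • η := by
    rwa [hxβ, smul_mul', hβ, neg_mul, dvd_neg, mul_dvd_mul_iff_left hβ0] at hdvd
  have hgen : Subgroup.zpowers σ = ⊤ := zpowers_eq_top_of_orderOf_galEquivZMod hg
  obtain ⟨v, hvc, hv⟩ := exists_associated_altPeriod_of_dvd_smul hζ hgen
    (pow_ne_zero n g.ne_zero) (by lia) heven hη
  obtain ⟨k, hk, hprod⟩ := exists_prod_pow_smul_eq hζ hp2 hgen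
    (hxβ ▸ pow_smul_mul_altPeriod hn heven hψ hβ _) hdvd
    (by rw [hxβ, pow_add]; exact hβπ.symm.mul_mul hv)
  have hkc : 2 * k * c = n * c + v := by
    refine Nat.eq_of_mul_eq_mul_right hn.pos ?_
    rw [hg', hc, mul_assoc 2, Nat.mul_div_cancel_left _ two_pos] at hk
    linear_combination hk
  rwa [eq_succ_div_two_of_two_mul_mul_eq hn hc0 (by lia) hkc] at hprod

end Cyclotomic

theorem stmt8_general {p : ℕ} [Fact p.Prime] (hp2 : p ≠ 2) {n : ℕ} (hn : Odd n) (hnp : n ∣ p - 1)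
    {K : Type*} [Field K] [NumberField K] [IsCyclotomicExtension {p} ℚ K] {ζ : K}
    (hζ : IsPrimitiveRoot ζ p) {r : ℕ} (hr : orderOf (r : ZMod p) = p - 1)
    {l : ℤ} (hl : (l * (r - 1) : ZMod p) = 1) {σ : Gal(K/ℚ)} (hσ : σ ζ = ζ ^ r) {z : K}
    (hz : z = ζ ^ l * (∏ j ∈ range ((p - 1) / 2), (1 - ζ ^ r ^ j)) * (1 - ζ)) {x : K}
    (hx : x = ∑ j ∈ range ((p - 1) / n), (σ ^ ((j + 1) * n)) z)
    (hu : IsIntegral ℤ (σ x / x)) :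
    ∏ i ∈ range n, (σ ^ i) x = p ^ ((n + 1) / 2) ∨
      ∏ i ∈ range n, (σ ^ i) x = -p ^ ((n + 1) / 2) := by
  have hg := galEquivZMod_eq_natCast hζ hσ
  have hz' : z = (halfProd (cyclotomicChar hζ) l r * (1 - cyclotomicChar hζ 1) : 𝓞 K) := by
    have hone : (cyclotomicChar hζ 1 : K) = ζ := by simpa using coe_cyclotomicChar_intCast hζ 1
    simp [hz, coe_halfProd_cyclotomicChar, hr, hone]
  obtain ⟨y, hy⟩ : ∃ y, y = ∑ j ∈ range ((p - 1) / n), σ ^ ((j + 1) * n) •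
    (halfProd (cyclotomicChar hζ) l r * (1 - cyclotomicChar hζ 1)) := ⟨_, rfl⟩
  obtain rfl : x = y := by
    rw [hx, hz', hy, RingOfIntegers.coe_eq_algebraMap (∑ j ∈ _, _), map_sum]; rfl
  rw [← hg] at hy hl hr
  have hprod := prod_pow_smul_eq_of_dvd_smul hζ hp2 hn hnp rfl (orderOf_units.symm.trans hr) hl hy
    (dvd_smul_of_isIntegral_div hu)
  have hcoe : ∏ i ∈ range n, (σ ^ i) (y : K) = (∏ i ∈ range n, σ ^ i • y : 𝓞 K) :=
    (map_prod (algebraMap (𝓞 K) K) (fun i ↦ σ ^ i • y) _).symm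
  rw [hcoe]
  exact hprod.imp (fun h ↦ by simp [h]) (fun h ↦ by simp [h])

/-- If `σ(x)/x ∈ ℤ[ζ_p]`, then `|N_{K/ℚ}(x)| = p^{(n+1)/2}`, where the norm of `x`
from the degree-`n` field `K` is the product of its `n` conjugates `σ^i(x)`. -/
theorem stmt8 (p : ℕ+) (hp : (p : ℕ).Prime) (n : ℕ) (hn1 : 1 < n) (hnodd : Odd n)
    (hpn : (p : ℕ) % n = 1)
    (ζ : CyclotomicField p ℚ) (hζ : IsPrimitiveRoot ζ p)
    (r : ℕ) (hr : orderOf (r : ZMod p) = (p : ℕ) - 1)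
    (lam : ℤ) (hlam : ((lam * ((r : ℤ) - 1) : ℤ) : ZMod p) = 1)
    (σ : CyclotomicField p ℚ ≃ₐ[ℚ] CyclotomicField p ℚ) (hσ : σ ζ = ζ ^ r)
    (z : CyclotomicField p ℚ)
    (hz : z = ζ ^ lam * (∏ j ∈ Finset.range (((p : ℕ) - 1) / 2), (1 - ζ ^ r ^ j)) * (1 - ζ))
    (x : CyclotomicField p ℚ)
    (hx : x = ∑ j ∈ Finset.range (((p : ℕ) - 1) / n), (σ ^ ((j + 1) * n)) z)
    (hu : σ x / x ∈ Algebra.adjoin ℤ {ζ}) :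
    (∏ i ∈ Finset.range n, (σ ^ i) x) = ((p : ℕ) : CyclotomicField p ℚ) ^ ((n + 1) / 2) ∨
      (∏ i ∈ Finset.range n, (σ ^ i) x) = -((p : ℕ) : CyclotomicField p ℚ) ^ ((n + 1) / 2) := by
  have : Fact (p : ℕ).Prime := ⟨hp⟩
  have : IsCyclotomicExtension {(p : ℕ)} ℚ (CyclotomicField p ℚ) :=
    CyclotomicField.isCyclotomicExtension p ℚ
  have hnp : n ∣ p - 1 := hpn ▸ Nat.dvd_sub_mod (p : ℕ)
  have hp2 : (p : ℕ) ≠ 2 := fun h2 ↦ by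
    rw [h2] at hnp; exact hn1.ne' (Nat.dvd_one.1 hnp)
  exact stmt8_general hp2 hnodd hnp hζ hr (mod_cast hlam) hσ hz hx
    (adjoin_le_integralClosure (hζ.isIntegral p.pos) hu)
end

section
/- Let K and L be number fields with K ∩ L = Q, [K:Q] = l, [L:Q] = k, and coprime discriminants. Then the discriminant of the compositum KL equals d_K^k · d_L^l. -/
/-!
Products of integral bases of `K` and `L` form an integral basis of `KL`, because the discriminants
are coprime, and as `K` and `L` are linearly disjoint the trace matrix of this basis is the
Kronecker product of the two trace matrices.

For linear disjointness, embed everything in a Galois number field `N`. A subfield of `N` is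
unramified at `p` if and only if it is fixed by the inertia groups of all primes of `N` above `p`.
Hence a prime that is unramified in `K` is unramified in every conjugate of `K`, and so in the
normal closure of `K`. Therefore the normal closure of `K` meets `L` in an everywhere unramified
extension of `ℚ`, which is `ℚ` itself by Minkowski's theorem.
-/

open IntermediateField Module NumberField
open scoped Kronecker

section Ramification

variable (R : Type*) {T : Type*} [CommRing R] [IsDomain R] [CommRing T] [IsDomain T] [Algebra R T]
  [Module.Finite R T] [Module.Flat R T] (G : Type*) [Group G] [Finite G] [MulSemiringAction G T]
  [IsGaloisGroup G R T]

theorem card_inertia_eq_ramificationIdx (P : Ideal T) [P.IsPrime]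
    [PerfectField (P.under R).ResidueField] :
    Nat.card (P.inertia G) = P.ramificationIdx R := by
  rw [Ideal.card_inertia_eq_ramificationIdxIn (P.under R) P,
    Ideal.ramificationIdxIn_eq_ramificationIdx _ P G]

variable (S : Type*) [CommRing S] [IsDomain S] [Algebra R S] [Algebra S T] [IsScalarTower R S T]
  [Module.Finite S T] [Module.Flat S T] {G}

theorem ramificationIdx_under_eq_relIndex_inertia (H : Subgroup G) [IsGaloisGroup H S T]
    (P : Ideal T) [P.IsPrime] [PerfectField (P.under R).ResidueField]
    [PerfectField (P.under S).ResidueField] :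
    (P.under S).ramificationIdx R = H.relIndex (P.inertia G) := by
  have lagrange : Nat.card (P.inertia G) = H.relIndex (P.inertia G) * Nat.card (P.inertia H) := by
    rw [← Subgroup.index_mul_card (H.subgroupOf (P.inertia G)), Subgroup.relIndex,
      ← Subgroup.card_map_of_injective (Subgroup.subtype_injective (P.inertia G)),
      ← Subgroup.card_map_of_injective H.subtype_injective, AddSubgroup.inertia_map_subtype,
      Subgroup.subgroupOf_map_subtype, inf_comm]
  have tower : Nat.card (P.inertia G) = (P.under S).ramificationIdx R * Nat.card (P.inertia H) := by
    rw [card_inertia_eq_ramificationIdx R, card_inertia_eq_ramificationIdx S,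
      Ideal.ramificationIdx_tower (P.under S) P]
  exact Nat.eq_of_mul_eq_mul_right Nat.card_pos (tower.symm.trans lagrange)

end Ramification

/- On an intermediate field of an extension of `ℚ`, the algebra structure induced by the extension
and `DivisionRing.toRatAlgebra` are only propositionally equal. -/
theorem isGalois_toRatAlgebra (E : Type*) [Field E] [CharZero E] [a : Algebra ℚ E]
    [h : IsGalois ℚ E] : @IsGalois ℚ _ E _ DivisionRing.toRatAlgebra := by
  obtain rfl : a = DivisionRing.toRatAlgebra := Subsingleton.elim _ _
  exact h

universe u in
theorem exists_algHom_isGalois (M : Type u) [Field M] [NumberField M] :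
    ∃ (N : Type u) (_ : Field N) (_ : NumberField N) (_ : IsGalois ℚ N), Nonempty (M →ₐ[ℚ] N) := by
  let N := normalClosure ℚ M (AlgebraicClosure M)
  have : IsNormalClosure ℚ M N :=
    Algebra.IsAlgebraic.isNormalClosure_normalClosure fun _ ↦ IsAlgClosed.splits _
  have : Normal ℚ N := this.normal
  have : NumberField N := ⟨⟩
  exact ⟨N, inferInstance, inferInstance, isGalois_toRatAlgebra N (h := ⟨⟩),
    ⟨(algebraMap M N).toRatAlgHom⟩⟩

section GaloisNumberField

variable {N : Type*} [Field N] [NumberField N] [IsGalois ℚ N]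

theorem isUnramifiedAt_under_iff_le_fixedField_inertia (F : IntermediateField ℚ N)
    (P : Ideal (𝓞 N)) [P.IsPrime] :
    Algebra.IsUnramifiedAt ℤ (P.under (𝓞 F)) ↔ F ≤ fixedField (P.inertia Gal(N/ℚ)) := by
  have : IsGaloisGroup Gal(N/ℚ) ℤ (𝓞 N) := IsGaloisGroup.of_isFractionRing _ ℤ (𝓞 N) ℚ N
  have : IsGaloisGroup F.fixingSubgroup F N := IsGaloisGroup.intermediateField ..
  have : IsGaloisGroup F.fixingSubgroup (𝓞 F) (𝓞 N) :=
    IsGaloisGroup.of_isFractionRing _ (𝓞 F) (𝓞 N) F N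
  rw [IntermediateField.le_iff_le, ← Ideal.ramificationIdx_eq_one_iff,
    ramificationIdx_under_eq_relIndex_inertia ℤ (𝓞 F) F.fixingSubgroup, Subgroup.relIndex_eq_one]

theorem not_dvd_discr_iff_forall_le_fixedField_inertia (F : IntermediateField ℚ N) {p : ℤ}
    (hp : Prime p) :
    ¬ p ∣ discr F ↔ ∀ (P : Ideal (𝓞 N)) [P.IsPrime], (p : 𝓞 N) ∈ P →
      F ≤ fixedField (P.inertia Gal(N/ℚ)) := by
  rw [not_dvd_discr_iff_forall_mem F (𝓞 F) hp]
  refine ⟨fun h P _ hP ↦ ?_, fun h q _ hq ↦ ?_⟩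
  · rw [← isUnramifiedAt_under_iff_le_fixedField_inertia]
    exact h _ inferInstance (by simpa [Ideal.mem_comap] using hP)
  · obtain ⟨P, _, hP⟩ := Ideal.nonempty_primesOver (S := 𝓞 N) (P := q)
    obtain rfl := hP.over
    rw [isUnramifiedAt_under_iff_le_fixedField_inertia]
    exact h P (by simpa [Ideal.mem_comap] using hq)

theorem dvd_discr_iSup_iff {ι : Type*} (F : ι → IntermediateField ℚ N) {p : ℤ} (hp : Prime p) :
    p ∣ discr ↥(⨆ i, F i) ↔ ∃ i, p ∣ discr (F i) := by
  rw [← not_iff_not, not_exists]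
  simp only [not_dvd_discr_iff_forall_le_fixedField_inertia _ hp, iSup_le_iff]
  exact ⟨fun h i P _ hP ↦ h P hP i, fun h P _ hP i ↦ h i P hP⟩

theorem dvd_discr_of_dvd_discr_normalClosure {K : Type*} [Field K] [NumberField K] {p : ℤ}
    (hp : Prime p) (h : p ∣ discr (normalClosure ℚ K N)) : p ∣ discr K := by
  rw [normalClosure_def, dvd_discr_iSup_iff _ hp] at h
  obtain ⟨f, hf⟩ := h
  rwa [discr_eq_discr_of_ringEquiv K f.equivFieldRange.toRingEquiv]

theorem linearDisjoint_of_isGalois_of_isCoprime_discr (K L : IntermediateField ℚ N)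
    (hcop : IsCoprime (discr K) (discr L)) : K.LinearDisjoint L := by
  have hcop' : IsCoprime (discr (normalClosure ℚ K N)) (discr L) :=
    isCoprime_of_prime_dvd (fun h ↦ discr_ne_zero L h.2) fun p hp hK hL ↦
      hp.not_isUnit (hcop.isUnit_of_dvd' (dvd_discr_of_dvd_discr_normalClosure hp hK) hL)
  have : IsGalois ℚ (normalClosure ℚ K N) :=
    @isGalois_toRatAlgebra _ _ _ (IntermediateField.algebra' _) ⟨⟩
  exact (linearDisjoint_of_isGalois_isCoprime_discr N (normalClosure ℚ K N) L hcop').of_le_left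
    K.le_normalClosure

end GaloisNumberField

theorem linearDisjoint_of_linearDisjoint_map {F E E' : Type*} [Field F] [Field E] [Field E']
    [Algebra F E] [Algebra F E'] {K L : IntermediateField F E} [FiniteDimensional F K]
    [FiniteDimensional F L] (f : E →ₐ[F] E') (h : (K.map f).LinearDisjoint (L.map f)) :
    K.LinearDisjoint L := by
  apply LinearDisjoint.of_finrank_sup
  rw [((K ⊔ L).equivMap f).toLinearEquiv.finrank_eq, (K.equivMap f).toLinearEquiv.finrank_eq,
    (L.equivMap f).toLinearEquiv.finrank_eq, IntermediateField.map_sup]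
  exact h.finrank_sup

theorem linearDisjoint_of_isCoprime_discr {M : Type*} [Field M] [NumberField M]
    (K L : IntermediateField ℚ M) (hcop : IsCoprime (discr K) (discr L)) : K.LinearDisjoint L := by
  obtain ⟨N, _, _, _, ⟨f⟩⟩ := exists_algHom_isGalois M
  refine linearDisjoint_of_linearDisjoint_map f
    (linearDisjoint_of_isGalois_of_isCoprime_discr _ _ ?_)
  rwa [← discr_eq_discr_of_ringEquiv K (K.equivMap f).toRingEquiv,
    ← discr_eq_discr_of_ringEquiv L (L.equivMap f).toRingEquiv]

section LinearDisjoint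

variable {F E : Type*} [Field F] [Field E] [Algebra F E] [FiniteDimensional F E]
  {K L : IntermediateField F E}

theorem trace_mul_of_linearDisjoint (h₁ : K.LinearDisjoint L) (h₂ : K ⊔ L = ⊤) (x : K) (y : L) :
    Algebra.trace F E (x * y) = Algebra.trace F K x * Algebra.trace F L y :=
  have trace_y : Algebra.trace K E y = algebraMap F K (Algebra.trace F L y) :=
    h₁.trace_algebraMap h₂ y
  calc Algebra.trace F E (x * y)
    _ = Algebra.trace F K (Algebra.trace K E (x • (y : E))) := (Algebra.trace_trace _).symm
    _ = Algebra.trace F K (Algebra.trace F L y • x) := by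
      rw [map_smul, trace_y, smul_eq_mul, mul_comm, ← Algebra.smul_def]
    _ = Algebra.trace F K x * Algebra.trace F L y := by rw [map_smul, smul_eq_mul, mul_comm]

variable {ι κ : Type*}

theorem traceMatrix_mul_of_linearDisjoint (h₁ : K.LinearDisjoint L) (h₂ : K ⊔ L = ⊤) (b : ι → K)
    (c : κ → L) :
    Algebra.traceMatrix F (fun i : ι × κ ↦ (b i.1 * c i.2 : E)) =
      Algebra.traceMatrix F b ⊗ₖ Algebra.traceMatrix F c := by
  ext ⟨i, j⟩ ⟨i', j'⟩
  simp only [Algebra.traceMatrix_apply, Algebra.traceForm_apply, Matrix.kroneckerMap_apply]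
  rw [← trace_mul_of_linearDisjoint h₁ h₂, mul_mul_mul_comm]
  rfl

theorem discr_mul_of_linearDisjoint [Fintype ι] [Fintype κ] [DecidableEq ι] [DecidableEq κ]
    (h₁ : K.LinearDisjoint L) (h₂ : K ⊔ L = ⊤) (b : ι → K) (c : κ → L) :
    Algebra.discr F (fun i : ι × κ ↦ (b i.1 * c i.2 : E)) =
      Algebra.discr F b ^ Fintype.card κ * Algebra.discr F c ^ Fintype.card ι := by
  rw [Algebra.discr_def, traceMatrix_mul_of_linearDisjoint h₁ h₂, Matrix.det_kronecker,
    Algebra.discr_def, Algebra.discr_def]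

end LinearDisjoint

theorem coe_discr_eq_discr (M : Type*) [Field M] [NumberField M] {ι : Type*} [Fintype ι]
    [DecidableEq ι] (b : Basis ι ℤ (𝓞 M)) :
    (discr M : ℚ) = Algebra.discr ℚ (fun i ↦ (b i : M)) := by
  rw [← discr_eq_discr M b]
  refine (Algebra.discr_localizationLocalization ℤ (nonZeroDivisors ℤ) M b).symm.trans ?_
  congr! 2 with i
  exact b.localizationLocalization_apply ..

theorem exists_basis_mul_of_isCoprime_discr {M : Type*} [Field M] [NumberField M]
    {K L : IntermediateField ℚ M} (h : K ⊔ L = ⊤) (hcop : IsCoprime (discr K) (discr L))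
    {ι κ : Type*} (b : Basis ι ℤ (𝓞 K)) (c : Basis κ ℤ (𝓞 L)) :
    ∃ d : Basis (ι × κ) ℤ (𝓞 M), ∀ i, (d i : M) = ((b i.1 : K) : M) * ((c i.2 : L) : M) := by
  have h' : K.toSubalgebra ⊔ L.toSubalgebra = ⊤ := by
    rw [← sup_toSubalgebra_of_isAlgebraic_right, h, top_toSubalgebra]
  let c' : Basis κ (𝓞 K) (𝓞 M) := c.ofIsCoprimeDifferentIdeal ℤ (𝓞 M) (𝓞 K) (𝓞 L)
    (linearDisjoint_of_isCoprime_discr K L hcop) h'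
    (isCoprime_differentIdeal_of_isCoprime_discr M hcop)
  have hc' (j : κ) : c' j = algebraMap (𝓞 L) (𝓞 M) (c j) :=
    Basis.ofIsCoprimeDifferentIdeal_apply ..
  refine ⟨b.smulTower c', fun i ↦ ?_⟩
  rw [Basis.smulTower_apply, hc', Algebra.smul_def]
  rfl

theorem discr_eq_of_sup_eq_top {M : Type*} [Field M] [NumberField M] [a : Algebra ℚ M]
    {K L : IntermediateField ℚ M} [NumberField K] [NumberField L] (h : K ⊔ L = ⊤)
    (hcop : IsCoprime (discr K) (discr L)) :
    discr M = discr K ^ finrank ℚ L * discr L ^ finrank ℚ K := by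
  classical
  obtain rfl : a = DivisionRing.toRatAlgebra := Subsingleton.elim _ _
  have b := RingOfIntegers.basis K
  have c := RingOfIntegers.basis L
  obtain ⟨d, hd⟩ := exists_basis_mul_of_isCoprime_discr h hcop b c
  rw [← RingOfIntegers.rank K, ← RingOfIntegers.rank L, finrank_eq_card_basis b,
    finrank_eq_card_basis c]
  suffices (discr M : ℚ) = discr K ^ Fintype.card _ * discr L ^ Fintype.card _ by
    exact_mod_cast this
  rw [coe_discr_eq_discr M d, coe_discr_eq_discr K b, coe_discr_eq_discr L c]
  simp only [hd]
  exact discr_mul_of_linearDisjoint (linearDisjoint_of_isCoprime_discr K L hcop) h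
    (fun i ↦ (b i : K)) (fun j ↦ (c j : L))

theorem restrict_sup_restrict {F E : Type*} [Field F] [Field E] [Algebra F E]
    (K L : IntermediateField F E) :
    K.restrict (le_sup_left : K ≤ K ⊔ L) ⊔ L.restrict (le_sup_right : L ≤ K ⊔ L) = ⊤ := by
  rw [← lift_inj, lift_top, lift_sup, lift_restrict le_sup_left, lift_restrict le_sup_right]

/-- The ring isomorphism underlying `IntermediateField.restrictAlgEquiv`. Over `ℚ` it forgets an
algebra structure that is only propositionally equal to the canonical one. -/
noncomputable def restrictRingEquiv {F E : Type*} [Field F] [Field E] [Algebra F E]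
    {K M : IntermediateField F E} (h : K ≤ M) : K ≃+* K.restrict h :=
  (restrictAlgEquiv h).toRingEquiv

theorem finrank_rat_eq_of_ringEquiv {A B : Type*} [Ring A] [Ring B] [Module ℚ A] [Module ℚ B]
    (e : A ≃+* B) : finrank ℚ A = finrank ℚ B :=
  (e.toAddEquiv.toLinearEquiv (map_rat_smul e.toAddEquiv)).finrank_eq

theorem stmt16_general {E : Type*} [Field E] [Algebra ℚ E] (K L : IntermediateField ℚ E)
    [NumberField K] [NumberField L] [NumberField ↥(K ⊔ L)] (hcop : IsCoprime (discr K) (discr L)) :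
    discr ↥(K ⊔ L) = discr K ^ finrank ℚ L * discr L ^ finrank ℚ K := by
  let eK := restrictRingEquiv (le_sup_left : K ≤ K ⊔ L)
  let eL := restrictRingEquiv (le_sup_right : L ≤ K ⊔ L)
  have : NumberField (K.restrict (le_sup_left : K ≤ K ⊔ L)) := .of_ringEquiv _ _ eK
  have : NumberField (L.restrict (le_sup_right : L ≤ K ⊔ L)) := .of_ringEquiv _ _ eL
  rw [discr_eq_discr_of_ringEquiv K eK, discr_eq_discr_of_ringEquiv L eL] at hcop ⊢
  rw [finrank_rat_eq_of_ringEquiv eK, finrank_rat_eq_of_ringEquiv eL]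
  exact discr_eq_of_sup_eq_top (a := _) (restrict_sup_restrict K L) hcop

/-- Let `K` and `L` be number fields with `K ∩ L = ℚ`, `[K:ℚ] = l`, `[L:ℚ] = k`,
and coprime discriminants. Then the discriminant of the compositum `KL` is
`d_K^k * d_L^l`. -/
theorem stmt16 (K L : IntermediateField ℚ ℂ)
    [NumberField K] [NumberField L] [NumberField ↥(K ⊔ L)]
    (hKL : K ⊓ L = ⊥)
    (l k : ℕ) (hl : Module.finrank ℚ K = l) (hk : Module.finrank ℚ L = k)
    (hcop : IsCoprime (NumberField.discr K) (NumberField.discr L)) :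
    NumberField.discr ↥(K ⊔ L) =
      NumberField.discr K ^ k * NumberField.discr L ^ l := by
  subst hl hk
  exact stmt16_general K L hcop
end
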